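/- (Proposition 5: univariate queries via message passing.) For every vertex i ∈ V and every Lebesgue-measurable set Q ⊆ ℝ, the Lebesgue volume of Δ ∩ {x ∈ ℝ^V : x_i ∈ Q} equals ∫_ℝ 1[t ∈ Q]·1[t ∈ D_i]·b_i(t) dt. -/

import Mathlib

open MeasureTheory
open scoped ENNReal

noncomputable section

/-- The model region `Δ ⊆ ℝ^V` : the set of points `x` with `x_i ∈ D_i` for every vertex
`i` and `(x_i, x_j) ∈ D_{ij}` for every edge `{i,j}`. -/
def mpModel {V : Type*} (G : SimpleGraph V) (D : V → Set ℝ) (Dij : V → V → Set (ℝ × ℝ)) :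
    Set (V → ℝ) :=
  {x | (∀ i, x i ∈ D i) ∧ ∀ i j, G.Adj i j → (x i, x j) ∈ Dij i j}

/-- Every vertex of `T` is joined to `r` by a walk staying inside `T`. -/
def ConnectedFrom {V : Type*} (G : SimpleGraph V) (r : V) (T : Finset V) : Prop :=
  ∀ v ∈ T, ∃ w : G.Walk r v, ∀ u ∈ w.support, u ∈ T

namespace ConnectedFrom

variable {V : Type*} {G : SimpleGraph V} {r p q l : V} {T : Finset V}

theorem singleton (G : SimpleGraph V) (r : V) : ConnectedFrom G r {r} := by
  intro v hv
  obtain rfl := Finset.mem_singleton.1 hv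
  exact ⟨.nil, by simp⟩

theorem insert [DecidableEq V] (hT : ConnectedFrom G r T) (hp : p ∈ T) (hl : G.Adj l p) :
    ConnectedFrom G r (insert l T) := by
  intro v hv
  rcases Finset.mem_insert.1 hv with rfl | hv
  · obtain ⟨w, hw⟩ := hT p hp
    refine ⟨w.concat hl.symm, fun u hu => ?_⟩
    rw [SimpleGraph.Walk.support_concat] at hu
    simp only [List.mem_append, List.mem_singleton] at hu
    rcases hu with hu | rfl
    · exact Finset.mem_insert_of_mem (hw u hu)
    · exact Finset.mem_insert_self _ _
  · obtain ⟨w, hw⟩ := hT v hv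
    exact ⟨w, fun u hu => Finset.mem_insert_of_mem (hw u hu)⟩

/-- In an acyclic graph, a vertex outside a connected set has at most one neighbour in it. -/
theorem neighbor_unique (hT : ConnectedFrom G r T) (hG : G.IsAcyclic) (hl : l ∉ T)
    (hp : p ∈ T) (hq : q ∈ T) (hlp : G.Adj l p) (hlq : G.Adj l q) : p = q := by
  classical
  obtain ⟨w, hw⟩ := hT p hp
  obtain ⟨w', hw'⟩ := hT q hq
  have hwp : (w.bypass.concat hlp.symm).IsPath :=
    (w.bypass_isPath).concat (fun h => hl (hw _ (w.support_bypass_subset_support h))) _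
  have hwq : (w'.bypass.concat hlq.symm).IsPath :=
    (w'.bypass_isPath).concat (fun h => hl (hw' _ (w'.support_bypass_subset_support h))) _
  have h := congrArg Subtype.val ((hG.subsingleton_path r l).elim ⟨_, hwp⟩ ⟨_, hwq⟩)
  exact (SimpleGraph.Walk.concat_inj h).1

theorem neighborFinset_sdiff_insert [Fintype V] [DecidableEq V] [DecidableRel G.Adj]
    (hT : ConnectedFrom G r T) (hG : G.IsAcyclic) (hl : l ∉ T) (hp : p ∈ T) (hlp : G.Adj l p) :
    G.neighborFinset l \ (Insert.insert l T) = (G.neighborFinset l).erase p := by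
  ext c
  simp only [Finset.mem_sdiff, SimpleGraph.mem_neighborFinset, Finset.mem_insert,
    Finset.mem_erase, not_or]
  constructor
  · rintro ⟨hc, -, hcT⟩
    exact ⟨fun h => hcT (h ▸ hp), hc⟩
  · rintro ⟨hcp, hc⟩
    exact ⟨hc, hc.ne', fun hcT => hcp (hT.neighbor_unique hG hl hcT hp hc hlp)⟩

end ConnectedFrom

/-- The constraints of the model involving only vertices of `T`, together with the query
`x_r ∈ Q`. -/
def partialModel {V : Type*} (G : SimpleGraph V) (D : V → Set ℝ) (Dij : V → V → Set (ℝ × ℝ))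
    (r : V) (Q : Set ℝ) (T : Finset V) : Set (V → ℝ) :=
  {x | x r ∈ Q ∧ (∀ v ∈ T, x v ∈ D v) ∧ ∀ a ∈ T, ∀ b ∈ T, G.Adj a b → (x a, x b) ∈ Dij a b}

section MessagePassing

variable {V : Type*} {G : SimpleGraph V}
  {D : V → Set ℝ} {Dij : V → V → Set (ℝ × ℝ)} {m : V → V → ℝ → ℝ≥0∞} {r : V} {Q : Set ℝ}

theorem measurableSet_partialModel (hD : ∀ i, MeasurableSet (D i))
    (hDij : ∀ i j, MeasurableSet (Dij i j)) (hQ : MeasurableSet Q) (T : Finset V) :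
    MeasurableSet (partialModel G D Dij r Q T) := by
  have h : partialModel G D Dij r Q T = {x | x r ∈ Q} ∩ ((⋂ v ∈ T, {x | x v ∈ D v}) ∩
      ⋂ a ∈ T, ⋂ b ∈ T, ⋂ _ : G.Adj a b, {x | (x a, x b) ∈ Dij a b}) := by
    ext x
    simp [partialModel]
  rw [h]
  refine (measurable_pi_apply r hQ).inter (.inter ?_ ?_)
  · exact Finset.measurableSet_biInter _ fun v _ => measurable_pi_apply v (hD v)
  · exact Finset.measurableSet_biInter _ fun a _ => Finset.measurableSet_biInter _ fun b _ =>
      .iInter fun _ => ((measurable_pi_apply a).prodMk (measurable_pi_apply b)) (hDij a b)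

theorem update_mem_partialModel_insert [DecidableEq V] (hG : G.IsAcyclic)
    (hsym : ∀ i j, ∀ p : ℝ × ℝ, p ∈ Dij i j ↔ p.swap ∈ Dij j i)
    {T : Finset V} (hT : ConnectedFrom G r T) {l p : V} (hr : r ∈ T) (hl : l ∉ T) (hp : p ∈ T)
    (hlp : G.Adj l p) (x : V → ℝ) (s : ℝ) :
    Function.update x l s ∈ partialModel G D Dij r Q (insert l T) ↔
      x ∈ partialModel G D Dij r Q T ∧ (s, x p) ∈ Dij l p ∧ s ∈ D l := by
  have hu : ∀ v ∈ T, Function.update x l s v = x v := fun v hv =>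
    Function.update_of_ne (ne_of_mem_of_not_mem hv hl) _ _
  simp only [partialModel, Set.mem_ofPred_eq, Finset.forall_mem_insert, Function.update_self]
  rw [hu r hr]
  constructor
  · rintro ⟨h1, ⟨h2, h3⟩, ⟨-, h4⟩, h5⟩
    refine ⟨⟨h1, fun v hv => hu v hv ▸ h3 v hv, fun a ha b hb hab => ?_⟩, ?_, h2⟩
    · have := (h5 a ha).2 b hb hab
      rwa [hu a ha, hu b hb] at this
    · have := h4 p hp hlp
      rwa [hu p hp] at this
  · rintro ⟨⟨h1, h2, h3⟩, h4, h5⟩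
    refine ⟨h1, ⟨h5, fun v hv => (hu v hv).symm ▸ h2 v hv⟩,
      ⟨fun h => (G.irrefl h).elim, fun b hb hlb => ?_⟩,
      fun a ha => ⟨fun hal => ?_, fun b hb hab => ?_⟩⟩
    · obtain rfl := hT.neighbor_unique hG hl hb hp hlb hlp
      rwa [hu b hb]
    · obtain rfl := hT.neighbor_unique hG hl ha hp hal.symm hlp
      rw [hu a ha, hsym]
      exact h4
    · rw [hu a ha, hu b hb]
      exact h3 a ha b hb hab

/-- Messages sent into a connected vertex set from outside are measurable. -/
theorem measurable_message [Fintype V] [DecidableEq V] [DecidableRel G.Adj]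
    (hG : G.IsAcyclic) (hD : ∀ i, MeasurableSet (D i))
    (hDij : ∀ i j, MeasurableSet (Dij i j))
    (hm : ∀ i j, G.Adj i j → ∀ t : ℝ,
      m i j t = ∫⁻ x : ℝ,
        (Dij i j).indicator (1 : ℝ × ℝ → ℝ≥0∞) (x, t) *
          (D i).indicator (1 : ℝ → ℝ≥0∞) x *
          ∏ c ∈ (G.neighborFinset i).erase j, m c i x)
    (T : Finset V) (hT : ConnectedFrom G r T) {l p : V} (hl : l ∉ T) (hp : p ∈ T)
    (hlp : G.Adj l p) : Measurable (m l p) := by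
  have ih : ∀ c ∈ (G.neighborFinset l).erase p, Measurable (m c l) := by
    intro c hc
    rw [← hT.neighborFinset_sdiff_insert hG hl hp hlp, Finset.mem_sdiff,
      SimpleGraph.mem_neighborFinset] at hc
    exact measurable_message hG hD hDij hm (insert l T) (hT.insert hp hlp) hc.2
      (Finset.mem_insert_self _ _) hc.1.symm
  rw [funext (hm l p hlp)]
  refine Measurable.lintegral_prod_left' (f := fun z : ℝ × ℝ =>
    (Dij l p).indicator (1 : ℝ × ℝ → ℝ≥0∞) z * (D l).indicator (1 : ℝ → ℝ≥0∞) z.1 *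
      ∏ c ∈ (G.neighborFinset l).erase p, m c l z.1) ?_
  refine ((measurable_one.indicator (hDij l p)).mul
    ((measurable_one.indicator (hD l)).comp measurable_fst)).mul ?_
  exact Finset.measurable_fun_prod _ fun c hc => (ih c hc).comp measurable_fst
termination_by Tᶜ.card
decreasing_by
  exact Finset.card_lt_card (Finset.compl_ssubset_compl.2 (Finset.ssubset_insert hl))

/-- Integrating out the vertices outside a connected set `T` leaves the constraints inside `T`
times the messages flowing into `T`. -/
theorem lmarginal_compl_partialModel [Fintype V] [DecidableEq V] [DecidableRel G.Adj]
    (hG : G.IsTree) (hD : ∀ i, MeasurableSet (D i))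
    (hDij : ∀ i j, MeasurableSet (Dij i j))
    (hsym : ∀ i j, ∀ p : ℝ × ℝ, p ∈ Dij i j ↔ p.swap ∈ Dij j i)
    (hm : ∀ i j, G.Adj i j → ∀ t : ℝ,
      m i j t = ∫⁻ x : ℝ,
        (Dij i j).indicator (1 : ℝ × ℝ → ℝ≥0∞) (x, t) *
          (D i).indicator (1 : ℝ → ℝ≥0∞) x *
          ∏ c ∈ (G.neighborFinset i).erase j, m c i x)
    (hQ : MeasurableSet Q) (T : Finset V) (hr : r ∈ T) (hT : ConnectedFrom G r T) (x : V → ℝ) :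
    lmarginal (fun _ => volume) Tᶜ
        ((partialModel G D Dij r Q Finset.univ).indicator (1 : (V → ℝ) → ℝ≥0∞)) x =
      (partialModel G D Dij r Q T).indicator (1 : (V → ℝ) → ℝ≥0∞) x *
        ∏ v ∈ T, ∏ c ∈ G.neighborFinset v \ T, m c v (x v) := by
  by_cases hTu : T = Finset.univ
  · subst hTu
    simp [Finset.sdiff_eq_empty_iff_subset.2 (Finset.subset_univ _)]
  obtain ⟨l₀, hl₀⟩ : ∃ l, l ∉ T := by
    by_contra! h
    exact hTu (Finset.eq_univ_iff_forall.2 h)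
  obtain ⟨w⟩ := hG.connected.preconnected r l₀
  obtain ⟨d, -, hp, hl⟩ := w.exists_boundary_dart (T : Set V) hr hl₀
  obtain ⟨⟨p, l⟩, hpl⟩ := d
  simp only [Finset.mem_coe] at hp hl
  have hlp : G.Adj l p := hpl.symm
  have hcompl : Tᶜ = insert l (insert l T)ᶜ := by
    ext v
    by_cases hv : v = l <;> simp [hv, hl]
  have hl' : l ∉ (insert l T)ᶜ := by simp
  have hu : ∀ s, ∀ v ∈ T, Function.update x l s v = x v := fun s v hv =>
    Function.update_of_ne (ne_of_mem_of_not_mem hv hl) _ _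
  have hprod : ∏ v ∈ T, ∏ c ∈ G.neighborFinset v \ T, m c v (x v) =
      m l p (x p) * ∏ v ∈ T, ∏ c ∈ G.neighborFinset v \ insert l T, m c v (x v) := by
    rw [← Finset.mul_prod_erase _ _ hp, ← Finset.mul_prod_erase T (fun v =>
      ∏ c ∈ G.neighborFinset v \ insert l T, m c v (x v)) hp, ← mul_assoc]
    congr 1
    · rw [Finset.sdiff_insert, Finset.mul_prod_erase _ (fun c => m c p (x p))]
      simp [hl, hpl]
    · refine Finset.prod_congr rfl fun v hv => ?_
      rw [Finset.mem_erase] at hv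
      rw [Finset.sdiff_insert, Finset.erase_eq_of_notMem]
      intro h
      rw [Finset.mem_sdiff, SimpleGraph.mem_neighborFinset] at h
      exact hv.1 (hT.neighbor_unique hG.isAcyclic hl hv.2 hp h.1.symm hlp)
  have hmeas : Measurable fun s => (Dij l p).indicator (1 : ℝ × ℝ → ℝ≥0∞) (s, x p) *
      (D l).indicator (1 : ℝ → ℝ≥0∞) s * ∏ c ∈ (G.neighborFinset l).erase p, m c l s := by
    refine (((measurable_one.indicator (hDij l p)).comp measurable_prodMk_right).mul
      (measurable_one.indicator (hD l))).mul (Finset.measurable_fun_prod _ fun c hc => ?_)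
    rw [← hT.neighborFinset_sdiff_insert hG.isAcyclic hl hp hlp, Finset.mem_sdiff,
      SimpleGraph.mem_neighborFinset] at hc
    exact measurable_message hG.isAcyclic hD hDij hm (insert l T) (hT.insert hp hlp) hc.2
      (Finset.mem_insert_self _ _) hc.1.symm
  rw [hcompl, lmarginal_insert _
    (measurable_one.indicator (measurableSet_partialModel hD hDij hQ _)) hl', hprod,
    hm l p hlp (x p), mul_left_comm, ← lintegral_mul_const _ hmeas]
  refine lintegral_congr fun s => ?_
  rw [lmarginal_compl_partialModel hG hD hDij hsym hm hQ (insert l T)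
    (Finset.mem_insert_of_mem hr) (hT.insert hp hlp), Finset.prod_insert hl,
    hT.neighborFinset_sdiff_insert hG.isAcyclic hl hp hlp, Function.update_self,
    Finset.prod_congr rfl fun v hv => Finset.prod_congr rfl fun c _ => by rw [hu s v hv]]
  have hind := update_mem_partialModel_insert (D := D) (Q := Q) hG.isAcyclic
    hsym hT hr hl hp hlp x s
  by_cases h1 : x ∈ partialModel G D Dij r Q T <;> by_cases h2 : (s, x p) ∈ Dij l p <;>
    by_cases h3 : s ∈ D l <;> simp [hind, h1, h2, h3, Set.indicator]
termination_by Tᶜ.card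
decreasing_by
  exact Finset.card_lt_card (Finset.compl_ssubset_compl.2 (Finset.ssubset_insert hl))

end MessagePassing

/-- Proposition 5, univariate queries via message passing: for every vertex
`i` and every Lebesgue-measurable `Q ⊆ ℝ`, the Lebesgue volume of
`Δ ∩ {x : x_i ∈ Q}` equals `∫ 1[t ∈ Q] · 1[t ∈ D_i] · b_i(t) dt`. -/
theorem univariate_query_message_passing {V : Type*} [Fintype V] [DecidableEq V]
    (G : SimpleGraph V) [DecidableRel G.Adj] (hG : G.IsTree)
    (D : V → Set ℝ) (hD : ∀ i, MeasurableSet (D i))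
    (Dij : V → V → Set (ℝ × ℝ)) (hDij : ∀ i j, MeasurableSet (Dij i j))
    (hsym : ∀ i j, ∀ p : ℝ × ℝ, p ∈ Dij i j ↔ p.swap ∈ Dij j i)
    (m : V → V → ℝ → ℝ≥0∞)
    (hm : ∀ i j, G.Adj i j → ∀ t : ℝ,
      m i j t = ∫⁻ x : ℝ,
        (Dij i j).indicator (1 : ℝ × ℝ → ℝ≥0∞) (x, t) *
          (D i).indicator (1 : ℝ → ℝ≥0∞) x *
          ∏ c ∈ (G.neighborFinset i).erase j, m c i x)
    (i : V) (Q : Set ℝ) (hQ : MeasurableSet Q) :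
    volume (mpModel G D Dij ∩ {x : V → ℝ | x i ∈ Q})
      = ∫⁻ t : ℝ,
          Q.indicator (1 : ℝ → ℝ≥0∞) t * (D i).indicator (1 : ℝ → ℝ≥0∞) t *
            ∏ c ∈ G.neighborFinset i, m c i t := by
  have hset : mpModel G D Dij ∩ {x : V → ℝ | x i ∈ Q} =
      partialModel G D Dij i Q Finset.univ := by
    ext x
    simp only [mpModel, partialModel, Set.mem_inter_iff, Set.mem_ofPred_eq, Finset.mem_univ,
      true_imp_iff]
    tauto
  have hmeas := measurableSet_partialModel (G := G) (r := i) hD hDij hQ Finset.univ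
  have huniv : (Finset.univ : Finset V) = insert i {i}ᶜ := by
    ext v
    simp
  rw [hset, ← lintegral_indicator_one hmeas, volume_pi,
    lintegral_eq_lmarginal_univ (fun _ => (0 : ℝ)), huniv,
    lmarginal_insert _ (measurable_one.indicator (huniv ▸ hmeas)) (by simp)]
  refine lintegral_congr fun t => ?_
  rw [← huniv, lmarginal_compl_partialModel hG hD hDij hsym hm hQ {i}
    (Finset.mem_singleton_self i) (.singleton G i), Finset.prod_singleton, Function.update_self,
    Finset.sdiff_singleton_eq_erase, Finset.erase_eq_of_notMem (by simp)]
  congr 1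
  by_cases h1 : t ∈ Q <;> by_cases h2 : t ∈ D i <;>
    simp [partialModel, h1, h2, Set.indicator]
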